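/- (Chen–Yu) For every integer i ≥ 2, the length of the longest cycle in the Moon–Moser graph T_i is exactly 7·2^{i-2}; in particular, every cycle in T_i has length at most 7·2^{i-2}, and some cycle attains this length. -/

import Mathlib

/-- A state in the recursive construction of the Moon–Moser graphs `T_i`:
`faces` is the list of inner triangular faces (each a triple of vertices),
`next` is the label of the next vertex to be added (so the vertices used so far
are `0, 1, ..., next - 1`), and `edges` is the set of edges built so far. -/
structure MMState where
  faces : List (ℕ × ℕ × ℕ)
  next : ℕ
  edges : Finset (Sym2 ℕ)

/-- The initial state: `T_1 = K_4` on vertices `0, 1, 2, 3`, with outer triangle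
`x = 0`, `y = 1`, `z = 2`; its inner faces are the three triangles containing `3`. -/
def MMinit : MMState where
  faces := [(0, 1, 3), (0, 2, 3), (1, 2, 3)]
  next := 4
  edges := {s(0, 1), s(0, 2), s(0, 3), s(1, 2), s(1, 3), s(2, 3)}

/-- One step of the Moon–Moser construction: into each inner triangular face insert a
new vertex joined to the three vertices of that face; each face is replaced by three
new inner faces. -/
def MMstep (st : MMState) : MMState where
  faces := (st.faces.zipIdx.map (fun p =>
    let v := st.next + p.2
    [(p.1.1, p.1.2.1, v), (p.1.1, p.1.2.2, v), (p.1.2.1, p.1.2.2, v)])).flatten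
  next := st.next + st.faces.length
  edges := st.edges ∪ ((st.faces.zipIdx.map (fun p =>
    let v := st.next + p.2
    [s(p.1.1, v), s(p.1.2.1, v), s(p.1.2.2, v)])).flatten).toFinset

/-- The state after constructing `T_i` (for `i ≥ 1`). -/
def MMstate (i : ℕ) : MMState := MMstep^[i - 1] MMinit

/-- The number of vertices of the Moon–Moser graph `T_i` (its vertices being
`0, 1, ..., MMvertexCount i - 1`). -/
def MMvertexCount (i : ℕ) : ℕ := (MMstate i).next

/-- The Moon–Moser graph `T_i` (as a simple graph on `ℕ`); its outer triangle is
`x = 0`, `y = 1`, `z = 2`. -/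
def MoonMoser (i : ℕ) : SimpleGraph ℕ :=
  SimpleGraph.fromEdgeSet ((MMstate i).edges : Set (Sym2 ℕ))

/-!
Upper bound: the vertices added in the last step are pairwise nonadjacent and the neighbours of each
of them are pairwise adjacent. Skipping them therefore turns a cycle of `T_{i+1}` of length more
than 4 into a cycle of `T_i` of at least half its length, and `T_2` has only 7 vertices.

Lower bound: if the edges of a cycle of `T_i` lie on distinct inner faces, each edge can be rerouted
through the new vertex of its face. This doubles the length, and the two halves of every edge lie on
two different faces of the three into which its face is divided, so the step can be repeated. It
starts from the Hamiltonian cycle `0, 4, 1, 2, 6, 3, 5` of `T_2`.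
-/

variable {V : Type*} {G H : SimpleGraph V}

open SimpleGraph

section Cycles

theorem isCycle_of_nodup_tail_support {v : V} {c : G.Walk v v} (hc : c.support.tail.Nodup)
    (hlen : 3 ≤ c.length) : c.IsCycle := by
  cases c with
  | nil => simp at hlen
  | cons hadj p =>
    have hp : p.IsPath := by simpa [Walk.isPath_def] using hc
    refine (Walk.cons_isCycle_iff p hadj).2 ⟨hp, fun hmem => ?_⟩
    have : p.length = 1 := hp.length_eq_one_of_mem_edges (Sym2.eq_swap ▸ hmem)
    simp only [Walk.length_cons] at hlen
    omega

theorem length_le_card_of_isCycle {v : V} {c : G.Walk v v} (hc : c.IsCycle) {s : Finset V}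
    (hs : ∀ x ∈ c.support, x ∈ s) : c.length ≤ s.card := by
  classical
  calc c.length = c.support.tail.length := by simp
    _ = c.support.tail.toFinset.card := (List.toFinset_card_of_nodup hc.support_nodup).symm
    _ ≤ s.card := Finset.card_le_card fun x hx =>
      hs x (List.mem_of_mem_tail (List.mem_toFinset.1 hx))

end Cycles

section Stacking

/-- `H` arises from `G` by stacking new vertices: the vertices of `H` outside `S` are pairwise
nonadjacent, the neighbours of each of them form a clique of `G`, and every edge of `H` inside `S`
is an edge of `G`. Thus `T_{i+1}` is stacked on `T_i`, with `S` the vertex set of `T_i`. -/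
structure IsStackedOn (H G : SimpleGraph V) (S : Set V) : Prop where
  adj_of_adj {x y : V} : x ∈ S → y ∈ S → H.Adj x y → G.Adj x y
  mem_of_adj {v x : V} : v ∉ S → H.Adj v x → x ∈ S
  isClique_neighborSet {v : V} : v ∉ S → G.IsClique (H.neighborSet v)

namespace IsStackedOn

variable {S : Set V}

theorem exists_adj_support_suffix (h : IsStackedOn H G S) {u v w : V} (hu : u ∈ S) (hv : v ∈ S)
    (huw : H.Adj u w) (p : H.Walk w v) (hp : s(u, w) ∉ p.edges) :
    ∃ x ∈ S, ∃ q : H.Walk x v, G.Adj u x ∧ q.support <:+ p.support ∧ p.length ≤ q.length + 1 := by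
  by_cases hw : w ∈ S
  · exact ⟨w, hw, p, h.adj_of_adj hu hw huw, List.suffix_rfl, by omega⟩
  · cases p with
    | nil => exact absurd hv hw
    | @cons _ x _ hwx q =>
      have hux : u ≠ x := by
        rintro rfl
        exact hp (by simp [Sym2.eq_swap])
      exact ⟨x, h.mem_of_adj hw hwx, q, h.isClique_neighborSet hw huw.symm hwx hux,
        List.suffix_cons _ _, le_rfl⟩

theorem exists_isPath (h : IsStackedOn H G S) {u v : V} (p : H.Walk u v) (hp : p.IsPath)
    (hu : u ∈ S) (hv : v ∈ S) :
    ∃ q : G.Walk u v, q.IsPath ∧ q.support ⊆ p.support ∧ p.length ≤ 2 * q.length := by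
  match p, hp with
  | .nil, _ => exact ⟨.nil, by simp⟩
  | .cons (v := w) huw p, hp =>
    obtain ⟨hp, hup⟩ := (Walk.cons_isPath_iff huw p).1 hp
    obtain ⟨x, hx, r, hux, hrp, hlen⟩ := h.exists_adj_support_suffix hu hv huw p
      fun hmem => hup (p.fst_mem_support_of_mem_edges hmem)
    have hlen' : r.length ≤ p.length := by simpa using hrp.length_le
    obtain ⟨q, hq, hqr, hlenq⟩ :=
      h.exists_isPath r (.mk' (hrp.sublist.nodup hp.support_nodup)) hx hv
    have hqp : q.support ⊆ p.support := fun y hy => hrp.subset (hqr hy)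
    refine ⟨.cons hux q, hq.cons fun hmem => hup (hqp hmem), ?_, ?_⟩
    · simpa only [Walk.support_cons] using List.cons_subset_cons u hqp
    · simp only [Walk.length_cons]; omega
termination_by p.length

theorem exists_adj_isPath_of_isCycle (h : IsStackedOn H G S) {v : V} {c : H.Walk v v}
    (hc : c.IsCycle) (hv : v ∈ S) :
    ∃ (w : V) (q : G.Walk w v), G.Adj v w ∧ q.IsPath ∧ c.length ≤ 2 * (q.length + 1) := by
  cases c with
  | nil => exact absurd hc Walk.not_isCycle_nil
  | cons hvw p =>
    obtain ⟨hp, hvwp⟩ := (Walk.cons_isCycle_iff p hvw).1 hc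
    obtain ⟨x, hx, r, hvx, hrp, hlen⟩ := h.exists_adj_support_suffix hv hv hvw p hvwp
    obtain ⟨q, hq, -, hlenq⟩ := h.exists_isPath r (.mk' (hrp.sublist.nodup hp.support_nodup)) hx hv
    exact ⟨x, q, hvx, hq, by simp only [Walk.length_cons]; omega⟩

theorem length_le_two_mul_of_mem (h : IsStackedOn H G S) {N : ℕ} (hN : 2 ≤ N)
    (hG : ∀ (v : V) (c : G.Walk v v), c.IsCycle → c.length ≤ N) {v : V} {c : H.Walk v v}
    (hc : c.IsCycle) (hv : v ∈ S) : c.length ≤ 2 * N := by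
  obtain ⟨w, q, hvw, hq, hlen⟩ := h.exists_adj_isPath_of_isCycle hc hv
  by_cases hq2 : 2 ≤ q.length
  · have := hG v (.cons hvw q) <| isCycle_of_nodup_tail_support
      (by simpa using hq.support_nodup) (by simpa using hq2)
    rw [Walk.length_cons] at this
    omega
  · omega

theorem length_le_two_mul (h : IsStackedOn H G S) {N : ℕ} (hN : 2 ≤ N)
    (hG : ∀ (v : V) (c : G.Walk v v), c.IsCycle → c.length ≤ N) {v : V} {c : H.Walk v v}
    (hc : c.IsCycle) : c.length ≤ 2 * N := by
  classical
  by_cases hv : v ∈ S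
  · exact h.length_le_two_mul_of_mem hN hG hc hv
  · have hsnd : c.snd ∈ S := h.mem_of_adj hv (c.adj_snd hc.not_nil)
    have hmem : c.snd ∈ c.support := c.getVert_mem_support 1
    rw [← c.length_rotate c.snd hmem]
    exact h.length_le_two_mul_of_mem hN hG ((c.isCycle_rotate hmem).2 hc) hsnd

end IsStackedOn

end Stacking

section Bisection

/-- The edges obtained from the darts in `ds` by inserting a midpoint, taken from `M`, into each. -/
def bisectedEdges (ds : List G.Dart) (M : List V) : List (Sym2 V) :=
  (List.zipWith (fun d m => [s(d.fst, m), s(m, d.snd)]) ds M).flatten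

theorem exists_walk_edges_eq_bisectedEdges {u v : V} (p : G.Walk u v) {M : List V}
    (hpM : List.Forall₂ (fun d m => H.Adj d.fst m ∧ H.Adj m d.snd) p.darts M) :
    ∃ q : H.Walk u v, q.edges = bisectedEdges p.darts M ∧
      q.support.tail.Perm (p.support.tail ++ M) := by
  induction p generalizing M with
  | nil =>
    obtain rfl := List.forall₂_nil_left_iff.1 hpM
    exact ⟨.nil, rfl, .refl _⟩
  | @cons u w v huw p ih =>
    rw [Walk.darts_cons] at hpM
    obtain ⟨m, M, ⟨hum, hmw⟩, hM, rfl⟩ := List.forall₂_cons_left_iff.1 hpM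
    obtain ⟨q, hedges, hperm⟩ := ih hM
    refine ⟨.cons hum (.cons hmw q), by simp [hedges, bisectedEdges], ?_⟩
    have : (w :: q.support.tail).Perm (w :: p.support.tail ++ M) := hperm.cons w
    rw [Walk.cons_tail_support, Walk.cons_tail_support] at this
    simpa using (this.cons m).trans List.perm_middle.symm

theorem exists_isCycle_edges_eq_bisectedEdges {v : V} {c : G.Walk v v} (hc : c.IsCycle)
    {M : List V} (hM : List.Forall₂ (fun d m => H.Adj d.fst m ∧ H.Adj m d.snd) c.darts M)
    (hnodup : M.Nodup) (hdisj : c.support.Disjoint M) :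
    ∃ c' : H.Walk v v, c'.IsCycle ∧ c'.length = 2 * c.length ∧
      c'.edges = bisectedEdges c.darts M := by
  obtain ⟨c', hedges, hperm⟩ := exists_walk_edges_eq_bisectedEdges c hM
  have hlen : c'.length = 2 * c.length := by
    have hlenM : c.length = M.length := by simpa using hM.length_eq
    have hlenc' : c'.length = c.length + M.length := by simpa using hperm.length_eq
    omega
  have hc3 : 3 ≤ c.length := hc.three_le_length
  refine ⟨c', isCycle_of_nodup_tail_support (hperm.nodup_iff.2 ?_) (by omega), hlen, hedges⟩
  exact hc.support_nodup.append hnodup (List.disjoint_of_subset_left (List.tail_subset _) hdisj)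

end Bisection

/-- The three vertices of a face. -/
def corners (f : ℕ × ℕ × ℕ) : Finset ℕ := {f.1, f.2.1, f.2.2}

/-- The three faces into which the face `f` is divided by a new vertex `v` inside it. -/
def subfaces (f : ℕ × ℕ × ℕ) (v : ℕ) : List (ℕ × ℕ × ℕ) :=
  [(f.1, f.2.1, v), (f.1, f.2.2, v), (f.2.1, f.2.2, v)]

theorem snd_snd_eq_of_mem_subfaces {f g : ℕ × ℕ × ℕ} {v : ℕ} (hg : g ∈ subfaces f v) :
    g.2.2 = v := by
  simp only [subfaces, List.mem_cons, List.not_mem_nil, or_false] at hg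
  rcases hg with rfl | rfl | rfl <;> rfl

theorem corners_subset_of_mem_subfaces {f g : ℕ × ℕ × ℕ} {v : ℕ} (hg : g ∈ subfaces f v) :
    corners g ⊆ insert v (corners f) := by
  simp only [subfaces, List.mem_cons, List.not_mem_nil, or_false] at hg
  rcases hg with rfl | rfl | rfl <;> intro x <;>
    simp only [corners, Finset.mem_insert, Finset.mem_singleton] <;> tauto

theorem exists_subfaces_of_mem_corners {f : ℕ × ℕ × ℕ} {x y : ℕ} (hx : x ∈ corners f)
    (hy : y ∈ corners f) (hxy : x ≠ y) (v : ℕ) :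
    ∃ g ∈ subfaces f v, ∃ g' ∈ subfaces f v, g ≠ g' ∧
      s(x, v) ∈ (corners g).sym2 ∧ s(v, y) ∈ (corners g').sym2 := by
  obtain ⟨a, b, c⟩ := f
  simp only [corners, Finset.mem_insert, Finset.mem_singleton] at hx hy
  simp only [subfaces, corners, List.mem_cons, List.not_mem_nil, or_false, exists_eq_or_imp,
    exists_eq_left, Finset.mk_mem_sym2_iff, Finset.mem_insert, Finset.mem_singleton]
  grind

namespace MMState

variable {st : MMState} {f g : ℕ × ℕ × ℕ} {v x y : ℕ}

/-- The graph built so far, so that `MoonMoser i` is the graph of `MMstate i`. -/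
def graph (st : MMState) : SimpleGraph ℕ := fromEdgeSet (st.edges : Set (Sym2 ℕ))

/-- `v` is the vertex which `MMstep` inserts into the face `f`. -/
def IsApexOf (st : MMState) (v : ℕ) (f : ℕ × ℕ × ℕ) : Prop :=
  ∃ j, st.faces[j]? = some f ∧ v = st.next + j

theorem IsApexOf.mem_faces (h : st.IsApexOf v f) : f ∈ st.faces := by
  obtain ⟨j, hj, -⟩ := h
  exact List.mem_of_getElem? hj

theorem IsApexOf.next_le (h : st.IsApexOf v f) : st.next ≤ v := by
  obtain ⟨j, -, rfl⟩ := h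
  exact Nat.le_add_right _ _

theorem IsApexOf.lt_next_step (h : st.IsApexOf v f) : v < (MMstep st).next := by
  obtain ⟨j, hj, rfl⟩ := h
  exact Nat.add_lt_add_left (List.getElem?_eq_some_iff.1 hj).1 _

theorem IsApexOf.unique (hf : st.IsApexOf v f) (hg : st.IsApexOf v g) : f = g := by
  obtain ⟨j, hj, rfl⟩ := hf
  obtain ⟨k, hk, hjk⟩ := hg
  obtain rfl := Nat.add_left_cancel hjk
  exact Option.some_injective _ (hj.symm.trans hk)

/-- The vertex which `MMstep` inserts into `f` (into the first copy of `f`, should `f` occur more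
than once in the list of faces). -/
def apex (st : MMState) (f : ℕ × ℕ × ℕ) : ℕ := st.next + st.faces.idxOf f

theorem isApexOf_apex (hf : f ∈ st.faces) : st.IsApexOf (st.apex f) f :=
  ⟨st.faces.idxOf f, by simp [hf], rfl⟩

theorem mem_faces_step :
    g ∈ (MMstep st).faces ↔ ∃ f v, st.IsApexOf v f ∧ g ∈ subfaces f v := by
  simp [MMstep, IsApexOf, subfaces, List.mem_zipIdx_iff_getElem?]

theorem adj_graph_step :
    (MMstep st).graph.Adj x y ↔ st.graph.Adj x y ∨ x ≠ y ∧ ∃ f,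
      (st.IsApexOf y f ∧ x ∈ corners f) ∨ (st.IsApexOf x f ∧ y ∈ corners f) := by
  simp only [graph, MMstep, IsApexOf, corners, Finset.coe_union, List.coe_toFinset,
    List.mem_flatten, List.mem_map, List.mem_zipIdx_iff_getElem?, Prod.exists, ↓existsAndEq,
    and_true, List.mem_cons, List.not_mem_nil, or_false, fromEdgeSet_union, sup_adj,
    fromEdgeSet_adj, SetLike.mem_coe, ne_eq, Set.mem_ofPred_eq, Sym2.eq, Sym2.rel_iff',
    Prod.mk.injEq, Prod.swap_prod_mk, Finset.mem_insert, Finset.mem_singleton]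
  grind

/-- The invariant of the construction: all vertices in use are less than `next`, and the corners of
each face are joined to each other. -/
structure WellFormed (st : MMState) : Prop where
  lt_next_of_adj {x y : ℕ} : st.graph.Adj x y → x < st.next
  lt_next_of_mem_corners {f : ℕ × ℕ × ℕ} {x : ℕ} : f ∈ st.faces → x ∈ corners f → x < st.next
  isClique_corners {f : ℕ × ℕ × ℕ} : f ∈ st.faces → st.graph.IsClique (corners f)

theorem wellFormed_MMinit : MMinit.WellFormed where
  lt_next_of_adj h := by
    have h : _ ∈ MMinit.edges := ((fromEdgeSet_adj _).1 h).1
    simp only [MMinit, Finset.mem_insert, Finset.mem_singleton, Sym2.eq_iff] at h ⊢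
    omega
  lt_next_of_mem_corners {f x} hf hx := by
    have h : ∀ f ∈ MMinit.faces, ∀ x ∈ corners f, x < MMinit.next := by decide
    exact h f hf x hx
  isClique_corners := by
    simp [MMinit, corners, graph, SimpleGraph.IsClique, Set.Pairwise]

namespace WellFormed

theorem adj_graph_step_of_mem_corners (h : st.WellFormed) (hv : st.IsApexOf v f)
    (hx : x ∈ corners f) : (MMstep st).graph.Adj x v :=
  have hne : x ≠ v := ((h.lt_next_of_mem_corners hv.mem_faces hx).trans_le hv.next_le).ne
  adj_graph_step.2 <| .inr ⟨hne, f, .inl ⟨hv, hx⟩⟩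

theorem step (h : st.WellFormed) : (MMstep st).WellFormed where
  lt_next_of_adj := by
    have hle : st.next ≤ (MMstep st).next := Nat.le_add_right _ _
    intro x y hxy
    rcases adj_graph_step.1 hxy with hxy | ⟨-, f, ⟨hv, hx⟩ | ⟨hv, -⟩⟩
    · exact (h.lt_next_of_adj hxy).trans_le hle
    · exact (h.lt_next_of_mem_corners hv.mem_faces hx).trans_le hle
    · exact hv.lt_next_step
  lt_next_of_mem_corners := by
    have hle : st.next ≤ (MMstep st).next := Nat.le_add_right _ _
    intro g x hg hx
    obtain ⟨f, v, hv, hg⟩ := mem_faces_step.1 hg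
    rcases Finset.mem_insert.1 (corners_subset_of_mem_subfaces hg hx) with rfl | hx
    · exact hv.lt_next_step
    · exact (h.lt_next_of_mem_corners hv.mem_faces hx).trans_le hle
  isClique_corners := by
    intro g hg
    obtain ⟨f, v, hv, hg⟩ := mem_faces_step.1 hg
    have hf : (MMstep st).graph.IsClique (corners f) :=
      (h.isClique_corners hv.mem_faces).mono fun x y hxy => adj_graph_step.2 (.inl hxy)
    refine (hf.insert fun x hx _ => (h.adj_graph_step_of_mem_corners hv hx).symm).subset ?_
    exact_mod_cast corners_subset_of_mem_subfaces hg

theorem exists_isApexOf_of_adj_step (h : st.WellFormed) (hv : st.next ≤ v)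
    (hvx : (MMstep st).graph.Adj v x) : ∃ f, st.IsApexOf v f ∧ x ∈ corners f := by
  rcases adj_graph_step.1 hvx with hvx | ⟨-, f, ⟨hx, hvf⟩ | hvf⟩
  · exact absurd (h.lt_next_of_adj hvx) hv.not_gt
  · exact absurd (h.lt_next_of_mem_corners hx.mem_faces hvf) hv.not_gt
  · exact ⟨f, hvf⟩

theorem isStackedOn_graph_step (h : st.WellFormed) :
    IsStackedOn (MMstep st).graph st.graph (Set.Iio st.next) where
  adj_of_adj {x y} hx hy hxy := by
    rcases adj_graph_step.1 hxy with hxy | ⟨-, f, ⟨hyf, -⟩ | ⟨hxf, -⟩⟩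
    · exact hxy
    · exact absurd hy hyf.next_le.not_gt
    · exact absurd hx hxf.next_le.not_gt
  mem_of_adj {v x} hv hvx := by
    obtain ⟨f, hvf, hx⟩ := h.exists_isApexOf_of_adj_step (not_lt.1 hv) hvx
    exact h.lt_next_of_mem_corners hvf.mem_faces hx
  isClique_neighborSet {v} hv x hx y hy hxy := by
    obtain ⟨f, hvf, hxf⟩ := h.exists_isApexOf_of_adj_step (not_lt.1 hv) hx
    obtain ⟨g, hvg, hyg⟩ := h.exists_isApexOf_of_adj_step (not_lt.1 hv) hy
    obtain rfl := hvf.unique hvg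
    exact h.isClique_corners hvf.mem_faces hxf hyg hxy

theorem lt_next_of_mem_support (h : st.WellFormed) {c : st.graph.Walk v v} (hc : c.IsCycle)
    (hx : x ∈ c.support) : x < st.next := by
  obtain ⟨e, he, hxe⟩ := (Walk.mem_support_iff_exists_mem_edges_of_not_nil hc.not_nil).1 hx
  obtain ⟨y, rfl⟩ := hxe
  exact h.lt_next_of_adj (c.adj_of_mem_edges he)

end WellFormed

/-- `F` lists distinct faces of `st`, the `k`-th of which contains the `k`-th edge in `es`. -/
structure IsFaceAssignment (st : MMState) (es : List (Sym2 ℕ)) (F : List (ℕ × ℕ × ℕ)) : Prop where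
  nodup : F.Nodup
  subset : F ⊆ st.faces
  forall₂_mem : List.Forall₂ (fun e f => e ∈ (corners f).sym2) es F

namespace IsFaceAssignment

variable {es : List (Sym2 ℕ)} {F : List (ℕ × ℕ × ℕ)}

theorem nodup_map_apex (hF : st.IsFaceAssignment es F) : (F.map st.apex).Nodup :=
  hF.nodup.map_on fun _ hf _ hg hfg =>
    (isApexOf_apex (hF.subset hf)).unique (hfg ▸ isApexOf_apex (hF.subset hg))

theorem exists_bisectedEdges {G : SimpleGraph ℕ} {ds : List G.Dart}
    (hF : st.IsFaceAssignment (ds.map Dart.edge) F) :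
    ∃ F', (MMstep st).IsFaceAssignment (bisectedEdges ds (F.map st.apex)) F' ∧
      ∀ g ∈ F', ∃ f ∈ F, g.2.2 = st.apex f := by
  induction ds generalizing F with
  | nil =>
    obtain rfl := List.forall₂_nil_left_iff.1 hF.forall₂_mem
    exact ⟨[], ⟨.nil, List.nil_subset _, .nil⟩, by simp⟩
  | cons d ds ih =>
    obtain ⟨f, F, hd, hF₂, rfl⟩ := List.forall₂_cons_left_iff.1 hF.forall₂_mem
    obtain ⟨-, hnodup⟩ := List.nodup_cons.1 hF.nodup
    obtain ⟨hf, hsub⟩ := List.cons_subset.1 hF.subset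
    obtain ⟨F', hF', hapex⟩ := ih ⟨hnodup, hsub, hF₂⟩
    obtain ⟨hx, hy⟩ := Finset.mk_mem_sym2_iff.1 hd
    obtain ⟨g, hg, g', hg', hne, hxg, hyg'⟩ :=
      exists_subfaces_of_mem_corners hx hy d.adj.ne (st.apex f)
    have hmem : ∀ g ∈ subfaces f (st.apex f), g ∈ (MMstep st).faces := fun g hg =>
      mem_faces_step.2 ⟨f, st.apex f, isApexOf_apex hf, hg⟩
    have hnew : ∀ g ∈ subfaces f (st.apex f), g ∉ F' := by
      intro g hg hgF'
      obtain ⟨f', hf', hgf'⟩ := hapex g hgF'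
      have hff' : st.apex f = st.apex f' := (snd_snd_eq_of_mem_subfaces hg).symm.trans hgf'
      exact (List.nodup_cons.1 hF.nodup_map_apex).1 (hff' ▸ List.mem_map_of_mem hf')
    refine ⟨g :: g' :: F', ⟨?_, ?_, .cons hxg (.cons hyg' hF'.forall₂_mem)⟩, ?_⟩
    · exact List.nodup_cons.2 ⟨by simp [hne, hnew g hg], List.nodup_cons.2 ⟨hnew g' hg', hF'.nodup⟩⟩
    · exact List.cons_subset.2 ⟨hmem g hg, List.cons_subset.2 ⟨hmem g' hg', hF'.subset⟩⟩
    · have hgg' : ∀ e ∈ subfaces f (st.apex f), ∃ f' ∈ f :: F, e.2.2 = st.apex f' := fun e he =>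
        ⟨f, List.mem_cons_self, snd_snd_eq_of_mem_subfaces he⟩
      refine List.forall_mem_cons.2
        ⟨hgg' g hg, List.forall_mem_cons.2 ⟨hgg' g' hg', fun e he => ?_⟩⟩
      obtain ⟨f', hf', hef'⟩ := hapex e he
      exact ⟨f', List.mem_cons_of_mem f hf', hef'⟩

theorem exists_isCycle_step (h : st.WellFormed) {c : st.graph.Walk v v} (hc : c.IsCycle)
    (hF : st.IsFaceAssignment c.edges F) :
    ∃ (c' : (MMstep st).graph.Walk v v) (F' : List (ℕ × ℕ × ℕ)), c'.IsCycle ∧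
      c'.length = 2 * c.length ∧ (MMstep st).IsFaceAssignment c'.edges F' := by
  have hM : List.Forall₂ (fun d m => (MMstep st).graph.Adj d.fst m ∧ (MMstep st).graph.Adj m d.snd)
      c.darts (F.map st.apex) := by
    rw [List.forall₂_map_right_iff]
    have hmem := hF.forall₂_mem
    rw [Walk.edges, List.forall₂_map_left_iff] at hmem
    rw [List.forall₂_iff_zip] at hmem ⊢
    refine ⟨hmem.1, fun {d f} hdf => ?_⟩
    have hf : st.IsApexOf (st.apex f) f := isApexOf_apex (hF.subset (List.of_mem_zip hdf).2)
    obtain ⟨hx, hy⟩ := Finset.mk_mem_sym2_iff.1 (hmem.2 hdf)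
    exact ⟨h.adj_graph_step_of_mem_corners hf hx, (h.adj_graph_step_of_mem_corners hf hy).symm⟩
  have hdisj : c.support.Disjoint (F.map st.apex) := by
    intro x hx hxF
    obtain ⟨f, hf, rfl⟩ := List.mem_map.1 hxF
    exact (isApexOf_apex (hF.subset hf)).next_le.not_gt (h.lt_next_of_mem_support hc hx)
  obtain ⟨c', hc', hlen, hedges⟩ :=
    exists_isCycle_edges_eq_bisectedEdges hc hM hF.nodup_map_apex hdisj
  obtain ⟨F', hF', -⟩ := hF.exists_bisectedEdges
  exact ⟨c', F', hc', hlen, hedges ▸ hF'⟩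

end IsFaceAssignment

end MMState

open MMState

theorem MMstate_succ {i : ℕ} (hi : 1 ≤ i) : MMstate (i + 1) = MMstep (MMstate i) := by
  obtain ⟨k, rfl⟩ := Nat.exists_eq_add_of_le' hi
  exact Function.iterate_succ_apply' MMstep k MMinit

theorem wellFormed_MMstate (i : ℕ) : (MMstate i).WellFormed :=
  Function.Iterate.rec WellFormed wellFormed_MMinit (fun _ => WellFormed.step) (i - 1)

theorem length_le_of_isCycle_MMstate {i : ℕ} (hi : 2 ≤ i) :
    ∀ (v : ℕ) (c : (MMstate i).graph.Walk v v), c.IsCycle → c.length ≤ 7 * 2 ^ (i - 2) := by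
  induction i, hi using Nat.le_induction with
  | base =>
    intro v c hc
    exact length_le_card_of_isCycle hc (s := Finset.range 7) fun x hx =>
      Finset.mem_range.2 ((wellFormed_MMstate 2).lt_next_of_mem_support hc hx)
  | succ i hi ih =>
    have hstack : IsStackedOn (MMstate (i + 1)).graph (MMstate i).graph
        (Set.Iio (MMstate i).next) := by
      rw [MMstate_succ (by omega)]
      exact (wellFormed_MMstate i).isStackedOn_graph_step
    have hpow : 1 ≤ 2 ^ (i - 2) := Nat.one_le_two_pow
    intro v c hc
    calc c.length ≤ 2 * (7 * 2 ^ (i - 2)) := hstack.length_le_two_mul (by omega) ih hc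
      _ = 7 * 2 ^ (i + 1 - 2) := by rw [Nat.sub_add_comm hi, pow_succ]; ring

theorem exists_isCycle_isFaceAssignment_MMstate_two :
    ∃ (c : (MMstate 2).graph.Walk 0 0) (F : List (ℕ × ℕ × ℕ)), c.IsCycle ∧ c.length = 7 ∧
      (MMstate 2).IsFaceAssignment c.edges F := by
  have hadj : [0, 4, 1, 2, 6, 3, 5, 0].IsChain (MMstate 2).graph.Adj := by
    simp [graph, MMstate, MMstep, MMinit]
  let c : (MMstate 2).graph.Walk 0 0 := .ofSupport _ (by simp) hadj
  refine ⟨c, [(0, 1, 4), (1, 3, 4), (1, 2, 6), (2, 3, 6), (1, 3, 6), (2, 3, 5), (0, 2, 5)],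
    isCycle_of_nodup_tail_support ?_ (by simp [c]), by simp [c], by decide, by decide, ?_⟩
  · simp [c]
  · simp [c, corners]

theorem exists_isCycle_isFaceAssignment {i : ℕ} (hi : 2 ≤ i) :
    ∃ (c : (MMstate i).graph.Walk 0 0) (F : List (ℕ × ℕ × ℕ)), c.IsCycle ∧
      c.length = 7 * 2 ^ (i - 2) ∧ (MMstate i).IsFaceAssignment c.edges F := by
  induction i, hi using Nat.le_induction with
  | base => exact exists_isCycle_isFaceAssignment_MMstate_two
  | succ i hi ih =>
    obtain ⟨c, F, hc, hlen, hF⟩ := ih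
    obtain ⟨c', F', hc', hlen', hF'⟩ := hF.exists_isCycle_step (wellFormed_MMstate i) hc
    rw [MMstate_succ (by omega)]
    refine ⟨c', F', hc', ?_, hF'⟩
    rw [hlen', hlen, Nat.sub_add_comm hi, pow_succ]
    ring

/-- (Chen–Yu) For every integer `i ≥ 2`, the length of the longest cycle in the
Moon–Moser graph `T_i` is exactly `7·2^(i-2)`: every cycle in `T_i` has length at most
`7·2^(i-2)`, and some cycle attains this length. -/
theorem moonMoser_longest_cycle (i : ℕ) (hi : 2 ≤ i) :
    (∀ (v : ℕ) (c : (MoonMoser i).Walk v v), c.IsCycle → c.length ≤ 7 * 2 ^ (i - 2)) ∧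
    (∃ (v : ℕ) (c : (MoonMoser i).Walk v v), c.IsCycle ∧ c.length = 7 * 2 ^ (i - 2)) := by
  obtain ⟨c, -, hc, hlen, -⟩ := exists_isCycle_isFaceAssignment hi
  exact ⟨length_le_of_isCycle_MMstate hi, 0, c, hc, hlen⟩
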